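/- Let Q ∈ L²_unif(ℝ), τ ∈ L¹_unif(ℝ), set K := 2(‖Q‖_{L²_unif(ℝ)} + ‖τ‖_{L¹_unif(ℝ)}), and for u ∈ H¹(ℝ) define t_{Q,τ}[u] := −∫_ℝ Q(x)( conj(u'(x)) u(x) + conj(u(x)) u'(x) ) dx + ∫_ℝ τ(x) |u(x)|² dx. Then for every ε ∈ (0,1] and every u ∈ H¹(ℝ): | t_{Q,τ}[u] | ≤ K ε ‖u'‖²_{L²(ℝ)} + 4 K ε^{−3} ‖u‖²_{L²(ℝ)}. -/

import Mathlib

open MeasureTheory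

/-- The Stepanov `L²_unif` norm: `(sup_t ∫_t^{t+1} |Q|²)^{1/2}`. -/
noncomputable def stepL2 (Q : ℝ → ℂ) : ℝ :=
  Real.sqrt (⨆ t : ℝ, ∫ s in t..(t + 1), ‖Q s‖ ^ 2)

/-- The Stepanov `L¹_unif` norm: `sup_t ∫_t^{t+1} |τ|`. -/
noncomputable def stepL1 (τ : ℝ → ℂ) : ℝ :=
  ⨆ t : ℝ, ∫ s in t..(t + 1), ‖τ s‖

/-- Membership in the Stepanov space `L²_unif(ℝ)`: locally square integrable with
finite Stepanov norm. -/
def InStepL2 (Q : ℝ → ℂ) : Prop :=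
  AEStronglyMeasurable Q volume ∧
  LocallyIntegrable (fun s => ‖Q s‖ ^ 2) volume ∧
  BddAbove (Set.range fun t : ℝ => ∫ s in t..(t + 1), ‖Q s‖ ^ 2)

/-- Membership in the Stepanov space `L¹_unif(ℝ)`: locally integrable with
finite Stepanov norm. -/
def InStepL1 (τ : ℝ → ℂ) : Prop :=
  LocallyIntegrable τ volume ∧
  BddAbove (Set.range fun t : ℝ => ∫ s in t..(t + 1), ‖τ s‖)

/-- `u ∈ H¹(ℝ)` with derivative `u'`: `u` is absolutely continuous with
`u x = u 0 + ∫_0^x u'`, and both `u` and `u'` are square integrable. -/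
def InH1 (u u' : ℝ → ℂ) : Prop :=
  LocallyIntegrable u' volume ∧
  (∀ x : ℝ, u x = u 0 + ∫ s in (0:ℝ)..x, u' s) ∧
  MemLp u 2 volume ∧ MemLp u' 2 volume

/-- The constant `K = 2(‖Q‖_{L²_unif} + ‖τ‖_{L¹_unif})`. -/
noncomputable def Kc (Q τ : ℝ → ℂ) : ℝ := 2 * (stepL2 Q + stepL1 τ)

/-- The sesquilinear form `t[u] = ‖u'‖² - ∫ Q (conj(u')u + conj(u)u') + ∫ τ|u|²`
associated with the Schrödinger operator with potential `q = Q' + τ`. -/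
noncomputable def tform (Q τ u u' : ℝ → ℂ) : ℂ :=
  (Complex.ofReal (∫ x : ℝ, ‖u' x‖ ^ 2))
    - (∫ x : ℝ, Q x * ((starRingEnd ℂ) (u' x) * u x + (starRingEnd ℂ) (u x) * u' x))
    + ∫ x : ℝ, τ x * (‖u x‖ : ℂ) ^ 2

/-!
Put `E := ε‖u'‖² + 4ε⁻³‖u‖²`. On a cell `(a, a + 1]`, comparing `u x` with the mean of `u` over a
subinterval of length `ε² / 2` containing `x` gives `‖u x‖² ≤ ε ∫ E`, while `∫ ‖u'‖² ≤ ε⁻¹ ∫ E` is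
clear. These two powers of `ε` cancel in `‖u‖_∞ ‖Q‖₂ ‖u'‖₂`, so the cell contributes at most
`(2 ‖Q‖ + ‖τ‖) ∫ E` to the form, with Stepanov norms, and one sums over the cells `(n, n + 1]`.
-/

open Set

section Measure

variable {α E : Type*} {m : MeasurableSpace α} {μ : Measure α} [NormedAddCommGroup E]

theorem integral_norm_mul_norm_le_sqrt_mul_sqrt {F : Type*} [NormedAddCommGroup F]
    {f : α → E} {g : α → F} (hf : MemLp f 2 μ) (hg : MemLp g 2 μ) :
    ∫ x, ‖f x‖ * ‖g x‖ ∂μ ≤ √(∫ x, ‖f x‖ ^ 2 ∂μ) * √(∫ x, ‖g x‖ ^ 2 ∂μ) := by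
  simpa [Real.sqrt_eq_rpow] using
    integral_mul_norm_le_Lp_mul_Lq (μ := μ) Real.HolderConjugate.two_two
      (f := fun x => ‖f x‖) (g := fun x => ‖g x‖) (by simpa using hf.norm) (by simpa using hg.norm)

theorem sq_integral_norm_le_measureReal_mul_integral_sq [IsFiniteMeasure μ] {f : α → E}
    (hf : MemLp f 2 μ) : (∫ x, ‖f x‖ ∂μ) ^ 2 ≤ μ.real univ * ∫ x, ‖f x‖ ^ 2 ∂μ := by
  have cauchy_schwarz : ∫ x, ‖f x‖ ∂μ ≤ √(∫ x, ‖f x‖ ^ 2 ∂μ) * √(μ.real univ) := by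
    simpa using integral_norm_mul_norm_le_sqrt_mul_sqrt hf (memLp_const (1 : ℝ))
  calc (∫ x, ‖f x‖ ∂μ) ^ 2 ≤ (√(∫ x, ‖f x‖ ^ 2 ∂μ) * √(μ.real univ)) ^ 2 := by gcongr
    _ = μ.real univ * ∫ x, ‖f x‖ ^ 2 ∂μ := by
      rw [mul_pow, Real.sq_sqrt (by positivity), Real.sq_sqrt measureReal_nonneg, mul_comm]

theorem integral_norm_mul_le_mul_integral_norm {R : Type*} [NormedRing R] {f g : α → R} {C : ℝ}
    (hf : Integrable f μ) (hg : ∀ᵐ x ∂μ, ‖g x‖ ≤ C) :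
    ∫ x, ‖f x * g x‖ ∂μ ≤ C * ∫ x, ‖f x‖ ∂μ := by
  rw [← integral_const_mul]
  refine integral_mono_of_nonneg (.of_forall fun _ => norm_nonneg _) (hf.norm.const_mul C) ?_
  filter_upwards [hg] with x hx
  calc ‖f x * g x‖ ≤ ‖f x‖ * ‖g x‖ := norm_mul_le _ _
    _ ≤ ‖f x‖ * C := by gcongr
    _ = C * ‖f x‖ := mul_comm _ _

section Cells

variable {ι : Type*} [Countable ι] {s : ι → Set α} {f : α → E} {g : α → ℝ}

theorem integrableOn_iUnion_of_setIntegral_norm_le (hs : ∀ i, MeasurableSet (s i))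
    (hd : Pairwise (Function.onFun Disjoint s)) (hf : ∀ i, IntegrableOn f (s i) μ)
    (hg : IntegrableOn g (⋃ i, s i) μ)
    (hfg : ∀ i, ∫ x in s i, ‖f x‖ ∂μ ≤ ∫ x in s i, g x ∂μ) :
    IntegrableOn f (⋃ i, s i) μ :=
  integrableOn_iUnion_of_summable_integral_norm hf <|
    (hasSum_integral_iUnion hs hd hg).summable.of_nonneg_of_le
      (fun _ => integral_nonneg fun _ => norm_nonneg _) hfg

theorem norm_setIntegral_iUnion_le_of_setIntegral_norm_le [NormedSpace ℝ E]
    (hs : ∀ i, MeasurableSet (s i))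
    (hd : Pairwise (Function.onFun Disjoint s)) (hf : ∀ i, IntegrableOn f (s i) μ)
    (hg : IntegrableOn g (⋃ i, s i) μ)
    (hfg : ∀ i, ∫ x in s i, ‖f x‖ ∂μ ≤ ∫ x in s i, g x ∂μ) :
    ‖∫ x in ⋃ i, s i, f x ∂μ‖ ≤ ∫ x in ⋃ i, s i, g x ∂μ := by
  have hf_union := integrableOn_iUnion_of_setIntegral_norm_le hs hd hf hg hfg
  exact (norm_integral_le_integral_norm f).trans <| hasSum_le hfg
    (hasSum_integral_iUnion hs hd hf_union.norm) (hasSum_integral_iUnion hs hd hg)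

end Cells

theorem norm_integral_le_of_forall_unit_cell [NormedSpace ℝ E] {μ : Measure ℝ} {f : ℝ → E}
    {g : ℝ → ℝ} (hf : ∀ a, IntegrableOn f (Ioc a (a + 1)) μ) (hg : Integrable g μ)
    (hfg : ∀ a, ∫ x in Ioc a (a + 1), ‖f x‖ ∂μ ≤ ∫ x in Ioc a (a + 1), g x ∂μ) :
    ‖∫ x, f x ∂μ‖ ≤ ∫ x, g x ∂μ := by
  simpa only [iUnion_Ioc_intCast, setIntegral_univ] using
    norm_setIntegral_iUnion_le_of_setIntegral_norm_le (fun _ => measurableSet_Ioc)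
      (pairwise_disjoint_Ioc_intCast ℝ) (fun n : ℤ => hf n) hg.integrableOn (fun n => hfg n)

end Measure

section Interval

variable {E : Type*} [NormedAddCommGroup E] [NormedSpace ℝ E] {u v : ℝ → E} {a b x : ℝ}

theorem norm_sq_intervalIntegral_le_of_mem_Icc {y : ℝ} (hv : MemLp v 2 (volume.restrict (Ioc a b)))
    (hx : x ∈ Icc a b) (hy : y ∈ Icc a b) :
    ‖∫ s in y..x, v s‖ ^ 2 ≤ (b - a) * ∫ s in Ioc a b, ‖v s‖ ^ 2 := by
  have hsub : uIoc y x ⊆ Ioc a b := Ioc_subset_Ioc (le_min hy.1 hx.1) (max_le hy.2 hx.2)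
  calc ‖∫ s in y..x, v s‖ ^ 2 ≤ (∫ s in uIoc y x, ‖v s‖) ^ 2 := by
        gcongr; exact intervalIntegral.norm_integral_le_integral_norm_uIoc
    _ ≤ (∫ s in Ioc a b, ‖v s‖) ^ 2 := by
        gcongr
        · exact .of_forall fun _ => norm_nonneg _
        · exact (hv.integrable one_le_two).norm
    _ ≤ (b - a) * ∫ s in Ioc a b, ‖v s‖ ^ 2 := by
        simpa [hx.1.trans hx.2] using sq_integral_norm_le_measureReal_mul_integral_sq hv

theorem norm_sq_le_of_mem_Icc (hab : a < b) (hu : MemLp u 2 (volume.restrict (Ioc a b)))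
    (hv : MemLp v 2 (volume.restrict (Ioc a b)))
    (huv : ∀ x ∈ Icc a b, ∀ y ∈ Icc a b, u x - u y = ∫ s in y..x, v s) (hx : x ∈ Icc a b) :
    ‖u x‖ ^ 2 ≤
      2 * (b - a) * (∫ s in Ioc a b, ‖v s‖ ^ 2) + 2 / (b - a) * ∫ s in Ioc a b, ‖u s‖ ^ 2 := by
  set A := ∫ s in Ioc a b, ‖v s‖ ^ 2
  have pointwise : ∀ y ∈ Ioc a b, ‖u x‖ ^ 2 ≤ 2 * ((b - a) * A) + 2 * ‖u y‖ ^ 2 := by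
    intro y hy
    calc ‖u x‖ ^ 2 ≤ (‖u x - u y‖ + ‖u y‖) ^ 2 := by
          gcongr; exact norm_le_norm_sub_add (u x) (u y)
      _ ≤ 2 * (‖u x - u y‖ ^ 2 + ‖u y‖ ^ 2) := add_sq_le
      _ ≤ 2 * ((b - a) * A + ‖u y‖ ^ 2) := by
          rw [huv x hx y (Ioc_subset_Icc_self hy)]
          gcongr
          exact norm_sq_intervalIntegral_le_of_mem_Icc hv hx (Ioc_subset_Icc_self hy)
      _ = 2 * ((b - a) * A) + 2 * ‖u y‖ ^ 2 := mul_add _ _ _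
  have averaged : (b - a) * ‖u x‖ ^ 2
      ≤ (b - a) * (2 * ((b - a) * A)) + 2 * ∫ y in Ioc a b, ‖u y‖ ^ 2 := by
    have hu_sq := hu.norm.integrable_sq.const_mul 2
    have := setIntegral_mono_on (integrable_const (‖u x‖ ^ 2)) ((integrable_const _).add hu_sq)
      measurableSet_Ioc pointwise
    simpa [integral_add (integrable_const _) hu_sq, integral_const_mul, hab.le] using this
  have hlen : 0 < b - a := sub_pos.2 hab
  refine le_of_mul_le_mul_left (averaged.trans_eq ?_) hlen
  field_simp

theorem exists_Icc_add_subset_Icc_of_mem {δ : ℝ} (hδ : 0 ≤ δ) (hδab : δ ≤ b - a)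
    (hx : x ∈ Icc a b) : ∃ c, x ∈ Icc c (c + δ) ∧ Icc c (c + δ) ⊆ Icc a b := by
  refine ⟨max a (x - δ), ⟨max_le hx.1 (by linarith), ?_⟩, Icc_subset_Icc (le_max_left _ _) ?_⟩
  · linarith [le_max_right a (x - δ)]
  · rw [← le_sub_iff_add_le]
    exact max_le (by linarith) (by linarith [hx.2])

theorem norm_sq_le_of_mem_Icc_of_le_length {δ : ℝ} (hδ : 0 < δ) (hδab : δ ≤ b - a)
    (hu : MemLp u 2 (volume.restrict (Ioc a b))) (hv : MemLp v 2 (volume.restrict (Ioc a b)))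
    (huv : ∀ x ∈ Icc a b, ∀ y ∈ Icc a b, u x - u y = ∫ s in y..x, v s) (hx : x ∈ Icc a b) :
    ‖u x‖ ^ 2 ≤ 2 * δ * (∫ s in Ioc a b, ‖v s‖ ^ 2) + 2 / δ * ∫ s in Ioc a b, ‖u s‖ ^ 2 := by
  obtain ⟨c, hxc, hc⟩ := exists_Icc_add_subset_Icc_of_mem hδ.le hδab hx
  have ⟨hac, hcb⟩ := (Icc_subset_Icc_iff (by linarith)).1 hc
  have hsub : Ioc c (c + δ) ⊆ Ioc a b := Ioc_subset_Ioc hac hcb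
  have hle := Measure.restrict_mono_set volume hsub
  calc ‖u x‖ ^ 2 ≤ 2 * δ * (∫ s in Ioc c (c + δ), ‖v s‖ ^ 2)
        + 2 / δ * ∫ s in Ioc c (c + δ), ‖u s‖ ^ 2 := by
        simpa using norm_sq_le_of_mem_Icc (by linarith) (hu.mono_measure hle)
          (hv.mono_measure hle) (fun x hx y hy => huv x (hc hx) y (hc hy)) hxc
    _ ≤ _ := by
        gcongr
        · exact .of_forall fun _ => sq_nonneg _
        · exact hv.norm.integrable_sq
        · exact .of_forall fun _ => sq_nonneg _
        · exact hu.norm.integrable_sq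

end Interval

section Form

open scoped ComplexConjugate

variable {α 𝕜 : Type*} [RCLike 𝕜] {m : MeasurableSpace α} {μ : Measure α} {Q u v : α → 𝕜} {M : ℝ}

theorem norm_mul_conj_add_conj_mul_le {w : 𝕜} (q z : 𝕜) (hw : ‖w‖ ^ 2 ≤ M) :
    ‖q * (conj z * w + conj w * z)‖ ≤ 2 * √M * (‖q‖ * ‖z‖) :=
  calc ‖q * (conj z * w + conj w * z)‖ ≤ ‖q‖ * (‖conj z * w‖ + ‖conj w * z‖) := by
        rw [norm_mul]; gcongr; exact norm_add_le _ _
    _ = 2 * ‖w‖ * (‖q‖ * ‖z‖) := by simp only [norm_mul, RCLike.norm_conj]; ring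
    _ ≤ 2 * √M * (‖q‖ * ‖z‖) := by gcongr; exact Real.le_sqrt_of_sq_le hw

theorem integrable_mul_conj_add_conj_mul (hQ : MemLp Q 2 μ) (hv : MemLp v 2 μ)
    (hu : AEStronglyMeasurable u μ) (hM : ∀ᵐ x ∂μ, ‖u x‖ ^ 2 ≤ M) :
    Integrable (fun x => Q x * (conj (v x) * u x + conj (u x) * v x)) μ := by
  have hconj {f : α → 𝕜} (hf : AEStronglyMeasurable f μ) :
      AEStronglyMeasurable (fun x => conj (f x)) μ :=
    RCLike.continuous_conj.comp_aestronglyMeasurable hf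
  refine ((hQ.norm.integrable_mul hv.norm).const_mul (2 * √M)).mono'
    (hQ.1.mul (((hconj hv.1).mul hu).add ((hconj hu).mul hv.1))) ?_
  filter_upwards [hM] with x hx using norm_mul_conj_add_conj_mul_le _ _ hx

theorem integral_norm_mul_conj_add_conj_mul_le (hQ : MemLp Q 2 μ) (hv : MemLp v 2 μ)
    (hM : ∀ᵐ x ∂μ, ‖u x‖ ^ 2 ≤ M) :
    ∫ x, ‖Q x * (conj (v x) * u x + conj (u x) * v x)‖ ∂μ ≤
      2 * √M * (√(∫ x, ‖Q x‖ ^ 2 ∂μ) * √(∫ x, ‖v x‖ ^ 2 ∂μ)) :=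
  calc ∫ x, ‖Q x * (conj (v x) * u x + conj (u x) * v x)‖ ∂μ
      ≤ ∫ x, 2 * √M * (‖Q x‖ * ‖v x‖) ∂μ := by
        refine integral_mono_of_nonneg (.of_forall fun _ => norm_nonneg _)
          ((hQ.norm.integrable_mul hv.norm).const_mul _) ?_
        filter_upwards [hM] with x hx using norm_mul_conj_add_conj_mul_le _ _ hx
    _ = 2 * √M * ∫ x, ‖Q x‖ * ‖v x‖ ∂μ := integral_const_mul _ _
    _ ≤ _ := by gcongr; exact integral_norm_mul_norm_le_sqrt_mul_sqrt hQ hv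

end Form

section Stepanov

variable {Q τ : ℝ → ℂ}

theorem InStepL2.memLp_restrict_Ioc (hQ : InStepL2 Q) (a b : ℝ) :
    MemLp Q 2 (volume.restrict (Ioc a b)) :=
  (memLp_two_iff_integrable_sq_norm hQ.1.restrict).2 <|
    (hQ.2.1.integrableOn_isCompact isCompact_Icc).mono_set Ioc_subset_Icc_self

theorem InStepL2.sqrt_setIntegral_le (hQ : InStepL2 Q) (a : ℝ) :
    √(∫ x in Ioc a (a + 1), ‖Q x‖ ^ 2) ≤ stepL2 Q := by
  rw [← intervalIntegral.integral_of_le (by linarith)]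
  exact Real.sqrt_le_sqrt (le_ciSup hQ.2.2 a)

theorem InStepL1.integrableOn_Ioc (hτ : InStepL1 τ) (a b : ℝ) : IntegrableOn τ (Ioc a b) :=
  (hτ.1.integrableOn_isCompact isCompact_Icc).mono_set Ioc_subset_Icc_self

theorem InStepL1.setIntegral_norm_le (hτ : InStepL1 τ) (a : ℝ) :
    ∫ x in Ioc a (a + 1), ‖τ x‖ ≤ stepL1 τ := by
  rw [← intervalIntegral.integral_of_le (by linarith)]
  exact le_ciSup hτ.2 a

theorem InStepL1.stepL1_nonneg (hτ : InStepL1 τ) : 0 ≤ stepL1 τ :=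
  (integral_nonneg fun _ => norm_nonneg _).trans (hτ.setIntegral_norm_le 0)

end Stepanov

/-- The energy density `ε‖u'‖² + 4ε⁻³‖u‖²` of `u` with derivative `u'` at scale `ε`, whose integral
is the right-hand side of the form estimate up to the factor `K`. -/
noncomputable def energyDensity (ε : ℝ) (u u' : ℝ → ℂ) (x : ℝ) : ℝ :=
  ε * ‖u' x‖ ^ 2 + 4 * ε⁻¹ ^ 3 * ‖u x‖ ^ 2

theorem energyDensity_nonneg {ε : ℝ} (hε : 0 ≤ ε) (u u' : ℝ → ℂ) (x : ℝ) :
    0 ≤ energyDensity ε u u' x := by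
  unfold energyDensity; positivity

namespace InH1

variable {Q τ u u' : ℝ → ℂ} {ε : ℝ}

theorem sub_eq_intervalIntegral (hu : InH1 u u') (x y : ℝ) : u x - u y = ∫ s in y..x, u' s := by
  have hint (c : ℝ) : IntervalIntegrable u' volume 0 c :=
    (hu.1.integrableOn_isCompact isCompact_uIcc).intervalIntegrable
  rw [hu.2.1 x, hu.2.1 y, add_sub_add_left_eq_sub,
    intervalIntegral.integral_interval_sub_left (hint x) (hint y)]

theorem memLp (hu : InH1 u u') : MemLp u 2 := hu.2.2.1

theorem memLp_deriv (hu : InH1 u u') : MemLp u' 2 := hu.2.2.2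

theorem integrable_energyDensity (hu : InH1 u u') (ε : ℝ) : Integrable (energyDensity ε u u') :=
  (hu.memLp_deriv.norm.integrable_sq.const_mul _).add (hu.memLp.norm.integrable_sq.const_mul _)

theorem setIntegral_energyDensity (hu : InH1 u u') (ε : ℝ) (s : Set ℝ) :
    ∫ x in s, energyDensity ε u u' x =
      ε * (∫ x in s, ‖u' x‖ ^ 2) + 4 * ε⁻¹ ^ 3 * ∫ x in s, ‖u x‖ ^ 2 := by
  simp only [energyDensity]
  rw [integral_add (hu.memLp_deriv.norm.integrable_sq.const_mul _).integrableOn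
    (hu.memLp.norm.integrable_sq.const_mul _).integrableOn, integral_const_mul, integral_const_mul]

theorem integral_energyDensity (hu : InH1 u u') (ε : ℝ) :
    ∫ x, energyDensity ε u u' x = ε * (∫ x, ‖u' x‖ ^ 2) + 4 * ε⁻¹ ^ 3 * ∫ x, ‖u x‖ ^ 2 := by
  simpa only [setIntegral_univ] using hu.setIntegral_energyDensity ε univ

theorem mul_setIntegral_norm_deriv_sq_le (hu : InH1 u u') (hε : 0 ≤ ε) (s : Set ℝ) :
    ε * ∫ x in s, ‖u' x‖ ^ 2 ≤ ∫ x in s, energyDensity ε u u' x := by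
  rw [hu.setIntegral_energyDensity]
  exact le_add_of_nonneg_right (by positivity)

theorem norm_sq_le_mul_setIntegral_energyDensity (hu : InH1 u u') (hε : 0 < ε) (hε1 : ε ≤ 1)
    {a x : ℝ} (hx : x ∈ Icc a (a + 1)) :
    ‖u x‖ ^ 2 ≤ ε * ∫ s in Ioc a (a + 1), energyDensity ε u u' s := by
  have hδ : ε ^ 2 / 2 ≤ a + 1 - a := by nlinarith
  calc ‖u x‖ ^ 2 ≤ 2 * (ε ^ 2 / 2) * (∫ s in Ioc a (a + 1), ‖u' s‖ ^ 2)
        + 2 / (ε ^ 2 / 2) * ∫ s in Ioc a (a + 1), ‖u s‖ ^ 2 :=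
        norm_sq_le_of_mem_Icc_of_le_length (by positivity) hδ (hu.memLp.restrict _)
          (hu.memLp_deriv.restrict _) (fun x _ y _ => hu.sub_eq_intervalIntegral x y) hx
    _ = ε * ∫ s in Ioc a (a + 1), energyDensity ε u u' s := by
        rw [hu.setIntegral_energyDensity]
        field_simp
        ring

theorem ae_norm_sq_le_mul_setIntegral_energyDensity (hu : InH1 u u') (hε : 0 < ε) (hε1 : ε ≤ 1)
    (a : ℝ) : ∀ᵐ x ∂volume.restrict (Ioc a (a + 1)),
      ‖u x‖ ^ 2 ≤ ε * ∫ s in Ioc a (a + 1), energyDensity ε u u' s := by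
  filter_upwards [ae_restrict_mem measurableSet_Ioc] with x hx using
    hu.norm_sq_le_mul_setIntegral_energyDensity hε hε1 (Ioc_subset_Icc_self hx)

theorem setIntegral_norm_mul_conj_add_conj_mul_le (hu : InH1 u u') (hQ : InStepL2 Q) (hε : 0 < ε)
    (hε1 : ε ≤ 1) (a : ℝ) :
    ∫ x in Ioc a (a + 1),
        ‖Q x * ((starRingEnd ℂ) (u' x) * u x + (starRingEnd ℂ) (u x) * u' x)‖ ≤
      2 * stepL2 Q * ∫ x in Ioc a (a + 1), energyDensity ε u u' x := by
  set A := ∫ x in Ioc a (a + 1), ‖u' x‖ ^ 2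
  set e := ∫ x in Ioc a (a + 1), energyDensity ε u u' x
  have he : 0 ≤ e := integral_nonneg (energyDensity_nonneg hε.le u u')
  have sqrt_mul_sqrt_le : √(ε * e) * √A ≤ e := by
    rw [← Real.sqrt_mul (by positivity), Real.sqrt_le_left he]
    calc ε * e * A = e * (ε * A) := by ring
      _ ≤ e * e := by gcongr; exact hu.mul_setIntegral_norm_deriv_sq_le hε.le _
      _ = e ^ 2 := (sq e).symm
  calc _ ≤ 2 * √(ε * e) * (√(∫ x in Ioc a (a + 1), ‖Q x‖ ^ 2) * √A) :=
        integral_norm_mul_conj_add_conj_mul_le (hQ.memLp_restrict_Ioc a (a + 1))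
          (hu.memLp_deriv.restrict _) (hu.ae_norm_sq_le_mul_setIntegral_energyDensity hε hε1 a)
    _ ≤ 2 * √(ε * e) * (stepL2 Q * √A) := by gcongr; exact hQ.sqrt_setIntegral_le a
    _ = 2 * stepL2 Q * (√(ε * e) * √A) := by ring
    _ ≤ 2 * stepL2 Q * e := by
        have : 0 ≤ stepL2 Q := Real.sqrt_nonneg _
        gcongr

theorem setIntegral_norm_mul_norm_sq_le (hu : InH1 u u') (hτ : InStepL1 τ) (hε : 0 < ε)
    (hε1 : ε ≤ 1) (a : ℝ) :
    ∫ x in Ioc a (a + 1), ‖τ x * (‖u x‖ : ℂ) ^ 2‖ ≤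
      stepL1 τ * ∫ x in Ioc a (a + 1), energyDensity ε u u' x := by
  set e := ∫ x in Ioc a (a + 1), energyDensity ε u u' x
  have he : 0 ≤ e := integral_nonneg (energyDensity_nonneg hε.le u u')
  calc _ ≤ ε * e * ∫ x in Ioc a (a + 1), ‖τ x‖ :=
        integral_norm_mul_le_mul_integral_norm (hτ.integrableOn_Ioc a (a + 1)) <| by
          simpa using hu.ae_norm_sq_le_mul_setIntegral_energyDensity hε hε1 a
    _ ≤ 1 * e * stepL1 τ := by gcongr; exact hτ.setIntegral_norm_le a
    _ = stepL1 τ * e := by ring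

theorem norm_integral_mul_conj_add_conj_mul_le (hu : InH1 u u') (hQ : InStepL2 Q) (hε : 0 < ε)
    (hε1 : ε ≤ 1) :
    ‖∫ x, Q x * ((starRingEnd ℂ) (u' x) * u x + (starRingEnd ℂ) (u x) * u' x)‖ ≤
      2 * stepL2 Q * ∫ x, energyDensity ε u u' x := by
  rw [← integral_const_mul]
  refine norm_integral_le_of_forall_unit_cell (fun a => ?_)
    ((hu.integrable_energyDensity ε).const_mul _) fun a => ?_
  · exact integrable_mul_conj_add_conj_mul (hQ.memLp_restrict_Ioc a (a + 1))
      (hu.memLp_deriv.restrict _) hu.memLp.1.restrict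
      (hu.ae_norm_sq_le_mul_setIntegral_energyDensity hε hε1 a)
  · rw [integral_const_mul]
    exact hu.setIntegral_norm_mul_conj_add_conj_mul_le hQ hε hε1 a

theorem norm_integral_mul_norm_sq_le (hu : InH1 u u') (hτ : InStepL1 τ) (hε : 0 < ε)
    (hε1 : ε ≤ 1) :
    ‖∫ x, τ x * (‖u x‖ : ℂ) ^ 2‖ ≤ stepL1 τ * ∫ x, energyDensity ε u u' x := by
  rw [← integral_const_mul]
  refine norm_integral_le_of_forall_unit_cell (fun a => ?_)
    ((hu.integrable_energyDensity ε).const_mul _) fun a => ?_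
  · have hmeas : AEStronglyMeasurable (fun x => (‖u x‖ : ℂ) ^ 2)
        (volume.restrict (Ioc a (a + 1))) :=
      (Complex.continuous_ofReal.comp_aestronglyMeasurable hu.memLp.1.restrict.norm).pow 2
    exact (hτ.integrableOn_Ioc a (a + 1)).mul_bdd hmeas <| by
      simpa using hu.ae_norm_sq_le_mul_setIntegral_energyDensity hε hε1 a
  · rw [integral_const_mul]
    exact hu.setIntegral_norm_mul_norm_sq_le hτ hε hε1 a

end InH1

/-- The perturbing form `t_{Q,τ}[u] = -∫ Q(conj(u')u + conj(u)u') + ∫ τ|u|²` satisfies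
`|t_{Q,τ}[u]| ≤ Kε‖u'‖² + 4Kε⁻³‖u‖²` for all `ε ∈ (0,1]`, where
`K = 2(‖Q‖_{L²_unif} + ‖τ‖_{L¹_unif})`. -/
theorem perturbation_form_estimate (Q τ u u' : ℝ → ℂ)
    (hQ : InStepL2 Q) (hτ : InStepL1 τ) (hu : InH1 u u')
    (ε : ℝ) (hε : 0 < ε) (hε1 : ε ≤ 1) :
    norm
        (-(∫ x : ℝ, Q x * ((starRingEnd ℂ) (u' x) * u x + (starRingEnd ℂ) (u x) * u' x))
          + ∫ x : ℝ, τ x * (‖u x‖ : ℂ) ^ 2) ≤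
      Kc Q τ * ε * (∫ x : ℝ, ‖u' x‖ ^ 2) + 4 * Kc Q τ * ε⁻¹ ^ 3 * (∫ x : ℝ, ‖u x‖ ^ 2) := by
  set e := ∫ x, energyDensity ε u u' x
  have he : 0 ≤ e := integral_nonneg (energyDensity_nonneg hε.le u u')
  calc _ ≤ 2 * stepL2 Q * e + stepL1 τ * e := by
        refine (norm_add_le _ _).trans ?_
        rw [norm_neg]
        exact add_le_add (hu.norm_integral_mul_conj_add_conj_mul_le hQ hε hε1)
          (hu.norm_integral_mul_norm_sq_le hτ hε hε1)
    _ ≤ Kc Q τ * e := by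
        unfold Kc
        linarith [mul_nonneg hτ.stepL1_nonneg he]
    _ = _ := by
        simp only [e, hu.integral_energyDensity ε]
        ring
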